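/- Let b be a positive even integer and x ∈ (1/b)ℤ. Then the function τ ↦ g⁺_τ(x) is holomorphic on H, there exist integers a_n (for n ∈ ℤ, bounded below) such that b · e(x²τ/2) · g⁺_τ(x) = ∑_n a_n e(nτ/(8b²)) for all τ ∈ H, and a_n = 0 whenever n/(8b²) < |x|/b + 1/(2b²) − 1/8; in particular g⁺_τ(x) = O(e^{−2πv(|x|/b + 1/(2b²) − 1/8)}) as v → ∞. -/

import Mathlib

open Complex MeasureTheory
open scoped Classical

noncomputable section

/-- `e(a) = exp(2πia)`. -/
def e (a : ℂ) : ℂ := Complex.exp (2 * (Real.pi : ℂ) * Complex.I * a)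

/-- The Fourier transform `F(g)(x) = ∫ g(w) e(wx) dw`. -/
def fourierT (g : ℝ → ℂ) (x : ℝ) : ℂ := ∫ w : ℝ, g w * e ((w * x : ℝ))

/-- The operator `E_σ(f)(x) = e(x²σ/2) ∫_0^x e(-w²σ/2) f(w) dw`. -/
def Eop (σ : ℂ) (f : ℝ → ℂ) (x : ℝ) : ℂ :=
  e ((x : ℂ)^2 * σ / 2) * ∫ w in (0:ℝ)..x, e (-(w : ℂ)^2 * σ / 2) * f w

/-- `ω_τ(x) = e(-x²τ/2) ∑_{m ∈ ℤ+1/2, m ≥ |x|} e(m²τ/2 + m/2)`. -/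
def omega (τ : ℂ) (x : ℝ) : ℂ :=
  e (-(x : ℂ)^2 * τ / 2) *
    ∑' m : ℤ, if |x| ≤ (m : ℝ) + 1/2 then
      e (((m : ℂ) + 1/2)^2 / 2 * τ + ((m : ℂ) + 1/2) / 2) else 0

/-- `η³(τ) = -i ∑_{m ∈ ℤ+1/2} m e(m²τ/2 + m/2)`. -/
def eta3 (τ : ℂ) : ℂ :=
  -Complex.I * ∑' m : ℤ, ((m : ℂ) + 1/2) * e (((m : ℂ) + 1/2)^2 / 2 * τ + ((m : ℂ) + 1/2) / 2)

/-- The complementary error function. -/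
def erfc (x : ℝ) : ℝ := (2 / Real.sqrt Real.pi) * ∫ t in Set.Ioi x, Real.exp (-t^2)

/-- `g⁺_τ`. -/
def gplus (τ : ℂ) (x : ℝ) : ℂ :=
  e (-(x : ℂ)^2 * τ / 2) * ((Real.sign x : ℂ) / (Complex.I * eta3 τ)) *
    ∑' m : ℤ, if |x| < (m : ℝ) + 1/2 then
      (((m : ℝ) + 1/2 - |x| : ℝ) : ℂ) * e (((m : ℂ) + 1/2)^2 / 2 * τ + ((m : ℂ) + 1/2) / 2)
    else 0

/-- `g*_τ`. -/
def gstar (τ : ℂ) (x : ℝ) : ℂ :=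
  e (-(x : ℂ)^2 * τ / 2) * ((Real.sign x : ℂ) / 2) *
    (erfc (Real.sqrt (2 * Real.pi * τ.im) * |x|) : ℂ)

/-- `g_τ = g⁺_τ - g*_τ`. -/
def gfun (τ : ℂ) (x : ℝ) : ℂ := gplus τ x - gstar τ x

/-- The operator `ξ_k f = 2i v^k conj(∂f/∂τ̄)`, with `∂/∂τ̄ = (1/2)(∂/∂u + i ∂/∂v)`. -/
def xi (k : ℝ) (f : ℂ → ℂ) (τ : ℂ) : ℂ :=
  2 * Complex.I * ((τ.im ^ k : ℝ) : ℂ) *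
    (starRingEnd ℂ) ((1/2 : ℂ) * (fderiv ℝ f τ 1 + Complex.I * fderiv ℝ f τ Complex.I))

/-- Sum of divisors function `σ₁`. -/
def sigma1 (n : ℕ) : ℕ := ∑ d ∈ Nat.divisors n, d

/-- The weight 2 Eisenstein series `E₂`. -/
def E2 (τ : ℂ) : ℂ := 1 - 24 * ∑' n : ℕ, (sigma1 (n+1) : ℂ) * e ((n + 1 : ℂ) * τ)

/-- `ϑ̃_{N,h}`. -/
def tvtheta (N : ℕ) (h : ℝ) (τ : ℂ) : ℂ :=
  (if ∃ m : ℤ, h = (m : ℝ) + 1/2 then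
      e ((h : ℂ) / 2) * E2 τ / (12 * (N : ℂ) * Complex.I * eta3 τ) else 0)
  + ∑' n : ℤ, gfun τ ((N : ℝ) * n + h)

/-- The Schwartz function `φ_τ(x,y) = √(2v)·x·e(x²τ/2 - y²τ̄/2)`. -/
def Phi (τ : ℂ) (x y : ℝ) : ℂ :=
  (Real.sqrt (2 * τ.im) : ℂ) * (x : ℂ) *
    e ((x : ℂ)^2 * τ / 2 - (y : ℂ)^2 * (starRingEnd ℂ) τ / 2)

/-- The signature (1,1) bilinear form `B((a₁,a₂),(b₁,b₂)) = a₁b₂ + a₂b₁`. -/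
def Bform (a b : ℝ × ℝ) : ℝ := a.1 * b.2 + a.2 * b.1

/-- `Z⁺_t = (t/√2, t⁻¹/√2)`. -/
def Zp (t : ℝ) : ℝ × ℝ := (t / Real.sqrt 2, t⁻¹ / Real.sqrt 2)

/-- `Z⁻_t = (t/√2, -t⁻¹/√2)`. -/
def Zm (t : ℝ) : ℝ × ℝ := (t / Real.sqrt 2, -t⁻¹ / Real.sqrt 2)

end


section jac

def gqPq (q : ℂ) (n : ℕ) : ℂ := ∏ i ∈ Finset.range n, (1 - q ^ (i + 1))

noncomputable def gqr (q : ℂ) (j : ℤ) : ℂ := if 0 ≤ j then (gqPq q j.toNat)⁻¹ else 0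

noncomputable def gqt (q : ℂ) (m : ℤ) : ℂ := (-1) ^ m * q ^ (m * (m + 1) / 2)

noncomputable def gqD (q : ℂ) (n : ℕ) (m : ℤ) : ℂ :=
  gqt q m * gqPq q (2 * n + 1) * gqr q (n - m) * gqr q (n + m + 1)

lemma gq_one_sub_ne {q : ℂ} (hq : ‖q‖ < 1) (n : ℕ) : 1 - q ^ (n + 1) ≠ 0 := by
  intro h
  have h1 : q ^ (n + 1) = 1 := (sub_eq_zero.mp h).symm
  have h2 : ‖q‖ ^ (n + 1) = 1 := by rw [← norm_pow, h1, norm_one]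
  have h3 : ‖q‖ ^ (n + 1) < 1 := pow_lt_one₀ (norm_nonneg _) hq (by omega)
  linarith

lemma gqPq_ne {q : ℂ} (hq : ‖q‖ < 1) (n : ℕ) : gqPq q n ≠ 0 :=
  Finset.prod_ne_zero_iff.mpr fun i _ => gq_one_sub_ne hq i

lemma gqPq_tendsto {q : ℂ} (hq : ‖q‖ < 1) :
    ∃ L : ℂ, L ≠ 0 ∧ Filter.Tendsto (gqPq q) Filter.atTop (nhds L) := by
  refine ⟨∏' n : ℕ, (1 - q ^ (n + 1)), ?_, ?_⟩
  · refine tprod_one_add_ne_zero_of_summable (f := fun n => -q ^ (n + 1)) ?_ ?_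
    · intro i
      have := gq_one_sub_ne hq i
      rwa [sub_eq_add_neg] at this
    · simpa using (summable_nat_add_iff 1).mpr (summable_geometric_of_lt_one (norm_nonneg _) hq)
  · exact (ModularForm.multipliable_one_sub_pow hq).hasProd.tendsto_prod_nat

lemma gqr_rec {q : ℂ} (hq : ‖q‖ < 1) (j : ℤ) : gqr q (j - 1) = (1 - q ^ j) * gqr q j := by
  rcases lt_trichotomy j 0 with h | h | h
  · simp [gqr, not_le.mpr h, show ¬ (1 ≤ j) by omega]
  · subst h; simp [gqr]
  · obtain ⟨n, rfl⟩ : ∃ n : ℕ, j = n + 1 := ⟨(j - 1).toNat, by omega⟩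
    have e1 : ((n : ℤ) + 1).toNat = n + 1 := by omega
    have h1 := gq_one_sub_ne hq n
    have h2 := gqPq_ne hq n
    have : q ^ ((n : ℤ) + 1) = q ^ (n + 1) := by exact_mod_cast zpow_natCast q (n + 1)
    have h3 : gqPq q (n + 1) = gqPq q n * (1 - q ^ (n + 1)) := Finset.prod_range_succ _ _
    simp only [gqr, add_sub_cancel_right, e1, this, Int.toNat_natCast, h3]
    rw [if_pos (by omega), if_pos (by omega)]
    field_simp

lemma gqt_succ {q : ℂ} (h0 : q ≠ 0) (m : ℤ) : gqt q (m + 1) = - q ^ (m + 1) * gqt q m := by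
  have : (m + 1) * (m + 1 + 1) / 2 = (m + 1) + m * (m + 1) / 2 := by
    rw [show (m + 1) * (m + 1 + 1) = m * (m + 1) + (m + 1) * 2 by ring,
      Int.add_mul_ediv_right _ _ (by norm_num)]
    ring
  rw [gqt, gqt, this, zpow_add₀ h0, zpow_add₀ (by norm_num : (-1 : ℂ) ≠ 0)]
  ring

lemma gqt_pred {q : ℂ} (h0 : q ≠ 0) (m : ℤ) : gqt q (m - 1) = - q ^ (-m) * gqt q m := by
  have h := gqt_succ h0 (m - 1)
  rw [sub_add_cancel] at h
  rw [h, zpow_neg]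
  have := zpow_ne_zero m h0
  field_simp

lemma gqD_rec {q : ℂ} (h0 : q ≠ 0) (hq : ‖q‖ < 1) (n : ℕ) (m : ℤ) :
    gqD q (n + 1) m = (1 + (q ^ (n + 1)) ^ 2) * gqD q n m
      - q ^ (n + 1) * (gqD q n (m - 1) + gqD q n (m + 1)) := by
  have hP : gqPq q (2 * (n + 1) + 1) =
      gqPq q (2 * n + 1) * (1 - q ^ (2 * n + 2)) * (1 - q ^ (2 * n + 3)) := by
    rw [show 2 * (n + 1) + 1 = (2 * n + 1) + 1 + 1 by ring, gqPq, Finset.prod_range_succ,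
      Finset.prod_range_succ, ← gqPq]
  have a1 := gqr_rec hq ((n : ℤ) + 1 - m)
  have a2 := gqr_rec hq ((n : ℤ) + 1 - m - 1)
  have b1 := gqr_rec hq ((n : ℤ) + 2 + m)
  have b2 := gqr_rec hq ((n : ℤ) + 2 + m - 1)
  simp only [gqD, hP, gqt_succ h0, gqt_pred h0]
  push_cast
  rw [show (n : ℤ) - (m + 1) = (n : ℤ) + 1 - m - 1 - 1 by ring,
    show (n : ℤ) - (m - 1) = (n : ℤ) + 1 - m by ring,
    show (n : ℤ) - m = (n : ℤ) + 1 - m - 1 by ring,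
    show (n : ℤ) + 1 + m + 1 = (n : ℤ) + 2 + m by ring,
    show (n : ℤ) + (m - 1) + 1 = (n : ℤ) + 2 + m - 1 - 1 by ring,
    show (n : ℤ) + (m + 1) + 1 = (n : ℤ) + 2 + m by ring,
    show (n : ℤ) + m + 1 = (n : ℤ) + 2 + m - 1 by ring, a2, a1, b2, b1]
  have c1 : q ^ ((n : ℤ) + 1 - m) = q ^ (n + 1) * (q ^ m)⁻¹ := by
    rw [zpow_sub₀ h0, div_eq_mul_inv]; norm_cast
  have c2 : q ^ ((n : ℤ) + 1 - m - 1) = q ^ n * (q ^ m)⁻¹ := by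
    rw [show (n : ℤ) + 1 - m - 1 = n - m by ring, zpow_sub₀ h0, div_eq_mul_inv]; norm_cast
  have c3 : q ^ ((n : ℤ) + 2 + m) = q ^ (n + 2) * (q ^ m) := by
    rw [zpow_add₀ h0]; norm_cast
  have c4 : q ^ ((n : ℤ) + 2 + m - 1) = q ^ (n + 1) * (q ^ m) := by
    rw [show (n : ℤ) + 2 + m - 1 = n + 1 + m by ring, zpow_add₀ h0]; norm_cast
  have c5 : q ^ (m + 1) = q * q ^ m := by rw [zpow_add_one₀ h0]; ring
  rw [c1, c2, c3, c4, c5, zpow_neg]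
  have hm : q ^ m ≠ 0 := zpow_ne_zero m h0
  generalize q ^ m = y at *
  field_simp
  ring

lemma gqD_supp (q : ℂ) (n : ℕ) (m : ℤ) (h : m ∉ Finset.Icc (-(n : ℤ) - 1) n) : gqD q n m = 0 := by
  rw [Finset.mem_Icc, not_and_or] at h
  rcases h with h | h
  · simp [gqD, gqr, show ¬ (0 ≤ (n : ℤ) + m + 1) by omega]
  · have : ¬ (0 ≤ (n : ℤ) - m) := by omega
    rw [gqD, gqr, if_neg this]; simp

lemma gqD_summable (q : ℂ) (n : ℕ) (f : ℤ → ℂ) : Summable fun m => f m * gqD q n m :=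
  summable_of_ne_finset_zero (s := Finset.Icc (-(n : ℤ) - 1) n)
    fun m hm => by rw [gqD_supp q n m hm, mul_zero]

lemma gqS_rec {q : ℂ} (h0 : q ≠ 0) (hq : ‖q‖ < 1) (n : ℕ) :
    ∑' m : ℤ, ((m : ℂ) + 1 / 2) * gqD q (n + 1) m =
      (1 - q ^ (n + 1)) ^ 2 * ∑' m : ℤ, ((m : ℂ) + 1 / 2) * gqD q n m := by
  have s0 := (gqD_summable q n (fun m => (m : ℂ) + 1 / 2)).hasSum
  have s1 := (gqD_summable q n (fun m => (m : ℂ) + 1 + 1 / 2)).hasSum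
  have s2 := (gqD_summable q n (fun m => (m : ℂ) - 1 + 1 / 2)).hasSum
  have s1' := (Equiv.subRight (1 : ℤ)).hasSum_iff.mpr s1
  have s2' := (Equiv.addRight (1 : ℤ)).hasSum_iff.mpr s2
  have e : ∑' m : ℤ, ((m : ℂ) + 1 + 1 / 2) * gqD q n m
      + ∑' m : ℤ, ((m : ℂ) - 1 + 1 / 2) * gqD q n m
      = 2 * ∑' m : ℤ, ((m : ℂ) + 1 / 2) * gqD q n m := by
    rw [← s1.summable.tsum_add s2.summable, ← tsum_mul_left]
    congr 1; ext m; ring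
  have := ((s0.mul_left (1 + (q ^ (n + 1)) ^ 2)).sub ((s1'.add s2').mul_left (q ^ (n + 1)))).tsum_eq
  rw [e] at this
  trans
  · rw [← sub_eq_zero]
    rw [← sub_eq_zero] at this
    rw [← this]
    congr 2
    ext m
    rw [gqD_rec h0 hq]
    simp only [Function.comp, Equiv.subRight_apply, Equiv.coe_addRight]
    push_cast
    ring
  · ring

lemma gqS_eq {q : ℂ} (h0 : q ≠ 0) (hq : ‖q‖ < 1) (n : ℕ) :
    ∑' m : ℤ, ((m : ℂ) + 1 / 2) * gqD q n m = gqPq q n ^ 2 := by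
  induction n with
  | zero =>
    rw [tsum_eq_sum (s := Finset.Icc (-((0 : ℕ) : ℤ) - 1) (0 : ℕ))
      fun m hm => by rw [gqD_supp q 0 m hm, mul_zero]]
    have : Finset.Icc (-((0 : ℕ) : ℤ) - 1) (0 : ℕ) = {-1, 0} := by decide
    have h1 : 1 - q ≠ 0 := by simpa using gq_one_sub_ne hq 0
    rw [this, Finset.sum_pair (by decide)]
    simp [gqD, gqt, gqr, gqPq]
    field_simp
    ring
  | succ n ih =>
    rw [gqS_rec h0 hq, ih, gqPq, gqPq, Finset.prod_range_succ]
    ring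

lemma gq_tri_le (n : ℕ) : n ≤ n * (n + 1) / 2 := by
  rw [Nat.le_div_iff_mul_le (by norm_num)]
  rcases n with _ | n
  · simp
  · nlinarith

lemma gq_tri_cast (n : ℕ) : ((n * (n + 1) / 2 : ℕ) : ℤ) = (n : ℤ) * (n + 1) / 2 := by
  push_cast; rfl

lemma gqt_nat (q : ℂ) (n : ℕ) : gqt q n = (-1) ^ n * q ^ (n * (n + 1) / 2) := by
  rw [gqt, ← gq_tri_cast, zpow_natCast, zpow_natCast]

lemma gqt_neg (q : ℂ) (n : ℕ) : gqt q (-(n + 1 : ℤ)) = - gqt q n := by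
  rw [gqt, gqt, show (-(n + 1 : ℤ)) * (-(n + 1 : ℤ) + 1) = (n : ℤ) * (n + 1) by ring, zpow_neg,
    zpow_add₀ (by norm_num)]
  have : ((-1 : ℂ) ^ (n : ℤ))⁻¹ = (-1) ^ (n : ℤ) := by
    rw [← inv_zpow]; norm_num
  rw [mul_inv, this]
  norm_num

lemma gq_summable_lin {r : ℝ} (h0 : 0 ≤ r) (hr : r < 1) (A B : ℝ) :
    Summable fun n : ℕ => (A * n + B) * r ^ n := by
  have h1 := summable_pow_mul_geometric_of_norm_lt_one 1 (r := r) (by rwa [Real.norm_of_nonneg h0])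
  have h2 := summable_geometric_of_lt_one h0 hr
  refine ((h1.mul_left A).add (h2.mul_left B)).congr fun n => ?_
  simp; ring

/-- general summability -/
lemma gq_summable {q : ℂ} (hq : ‖q‖ < 1) (w : ℕ → ℂ) (A B : ℝ) (hw : ∀ n, ‖w n‖ ≤ A * n + B) :
    Summable fun n : ℕ => ‖w n * q ^ (n * (n + 1) / 2)‖ := by
  refine Summable.of_nonneg_of_le (fun _ => norm_nonneg _) (fun n => ?_)
    (gq_summable_lin (norm_nonneg q) hq A B)
  rw [norm_mul, norm_pow]
  have h1 : ‖q‖ ^ (n * (n + 1) / 2) ≤ ‖q‖ ^ n :=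
    pow_le_pow_of_le_one (norm_nonneg _) hq.le (gq_tri_le n)
  exact mul_le_mul (hw n) h1 (by positivity) ((norm_nonneg _).trans (hw n))

lemma gq_t_hasSum {q : ℂ} (hq : ‖q‖ < 1) :
    Summable (fun m : ℤ => ‖((m : ℂ) + 1 / 2) * gqt q m‖) ∧
    ∑' m : ℤ, ((m : ℂ) + 1 / 2) * gqt q m
      = ∑' n : ℕ, ((-1) ^ n * (2 * n + 1) : ℂ) * q ^ (n * (n + 1) / 2) := by
  have hs := gq_summable hq (fun n => (-1) ^ n * ((n : ℂ) + 1 / 2)) 1 (1 / 2) (fun n => by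
    rw [norm_mul]; simp only [norm_pow, norm_neg, norm_one, one_pow, one_mul]
    refine (norm_add_le _ _).trans ?_
    simp)
  have e1 : ∀ n : ℕ, (((n : ℤ) : ℂ) + 1 / 2) * gqt q n =
      (-1) ^ n * ((n : ℂ) + 1 / 2) * q ^ (n * (n + 1) / 2) := fun n => by
    rw [gqt_nat]; push_cast; ring
  have e2 : ∀ n : ℕ, (((-(n + 1 : ℤ) : ℤ) : ℂ) + 1 / 2) * gqt q (-(n + 1 : ℤ)) =
      (-1) ^ n * ((n : ℂ) + 1 / 2) * q ^ (n * (n + 1) / 2) := fun n => by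
    rw [gqt_neg, gqt_nat]; push_cast; ring
  constructor
  · refine Summable.of_nat_of_neg_add_one ?_ ?_
    · simp_rw [e1]; exact hs
    · simp_rw [e2]; exact hs
  · rw [tsum_of_nat_of_neg_add_one]
    · simp_rw [e1, e2]
      rw [← hs.of_norm.tsum_add hs.of_norm]
      congr 1; ext n; ring
    · simp_rw [e1]; exact hs.of_norm
    · simp_rw [e2]; exact hs.of_norm

lemma gq_jacobi_ne {q : ℂ} (hq : ‖q‖ < 1) :
    ∑' n : ℕ, ((-1) ^ n * (2 * n + 1) : ℂ) * q ^ (n * (n + 1) / 2) ≠ 0 := by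
  by_cases h0 : q = 0
  · subst h0
    rw [tsum_eq_single 0]
    · simp
    · intro n hn
      have := gq_tri_le n
      rw [zero_pow (by omega), mul_zero]
  obtain ⟨hs, he⟩ := gq_t_hasSum hq
  rw [← he]
  obtain ⟨L, hL, hT⟩ := gqPq_tendsto hq
  have hT' := hT.inv₀ hL
  obtain ⟨C, hC⟩ := (Metric.isBounded_range_of_tendsto _ hT').exists_norm_le
  obtain ⟨C', hC'⟩ := (Metric.isBounded_range_of_tendsto _ hT).exists_norm_le
  have hC0 : 0 ≤ C := (norm_nonneg _).trans (hC _ ⟨0, rfl⟩)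
  have hr : ∀ j, ‖gqr q j‖ ≤ C := fun j => by
    unfold gqr; split_ifs
    · exact hC _ ⟨j.toNat, rfl⟩
    · simpa using hC0
  have hrt : ∀ u : ℕ → ℤ, Filter.Tendsto u Filter.atTop Filter.atTop →
      Filter.Tendsto (fun n => gqr q (u n)) Filter.atTop (nhds L⁻¹) := fun u hu => by
    have hu' : Filter.Tendsto (fun n => (u n).toNat) Filter.atTop Filter.atTop := by
      rw [Filter.tendsto_atTop] at hu ⊢
      intro b
      filter_upwards [hu b] with n hn
      omega
    refine (hT'.comp hu').congr' ?_
    filter_upwards [hu.eventually_ge_atTop 0] with n hn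
    simp [gqr, hn]
  have key : Filter.Tendsto (fun n : ℕ => ∑' m : ℤ, ((m : ℂ) + 1 / 2) * gqD q n m) Filter.atTop
      (nhds (∑' m : ℤ, ((m : ℂ) + 1 / 2) * gqt q m * (L * L⁻¹ * L⁻¹))) := by
    refine tendsto_tsum_of_dominated_convergence
      (bound := fun m : ℤ => ‖((m : ℂ) + 1 / 2) * gqt q m‖ * (C' * C * C)) (hs.mul_right _) ?_ ?_
    · intro m
      have t1 : Filter.Tendsto (fun n : ℕ => gqPq q (2 * n + 1)) Filter.atTop (nhds L) :=
        hT.comp (Filter.tendsto_atTop_mono (fun n => by omega : ∀ n, n ≤ 2 * n + 1)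
          Filter.tendsto_id)
      have t2 := hrt (fun n => (n : ℤ) - m) (Filter.tendsto_atTop_add_const_right _ (-m)
        tendsto_natCast_atTop_atTop)
      have t3 := hrt (fun n => (n : ℤ) + m + 1) (Filter.tendsto_atTop_add_const_right _ 1
        (Filter.tendsto_atTop_add_const_right _ m tendsto_natCast_atTop_atTop))
      have := ((t1.mul t2).mul t3).const_mul (((m : ℂ) + 1 / 2) * gqt q m)
      refine this.congr fun n => ?_
      simp only [gqD]; ring
    · refine Filter.Eventually.of_forall fun n m => ?_
      rw [gqD, show ((m : ℂ) + 1 / 2) * (gqt q m * gqPq q (2 * n + 1) * gqr q (n - m)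
        * gqr q (n + m + 1)) = (((m : ℂ) + 1 / 2) * gqt q m) * (gqPq q (2 * n + 1) * gqr q (n - m)
        * gqr q (n + m + 1)) by ring, norm_mul]
      refine mul_le_mul_of_nonneg_left ?_ (norm_nonneg _)
      rw [norm_mul, norm_mul]
      have := hC' _ ⟨2 * n + 1, rfl⟩
      gcongr
      · exact mul_nonneg ((norm_nonneg _).trans this) hC0
      · exact (norm_nonneg _).trans this
      · exact hr _
      · exact hr _
  simp_rw [gqS_eq h0 hq] at key
  have := tendsto_nhds_unique key (hT.pow 2)
  rw [tsum_mul_right] at this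
  intro h
  rw [h, zero_mul] at this
  exact hL (by simpa using this.symm)

end jac

section pser

lemma gq_fps (c : ℕ → ℂ) (hc : ∀ q : ℂ, ‖q‖ < 1 → Summable fun n => ‖c n * q ^ n‖) :
    HasFPowerSeriesOnBall (fun q => ∑' n, c n * q ^ n)
      (FormalMultilinearSeries.ofScalars ℂ c) 0 1 where
  r_le := by
    refine ENNReal.le_of_forall_nnreal_lt fun r hr => ?_
    have hr' : r < 1 := by exact_mod_cast hr
    refine FormalMultilinearSeries.le_radius_of_summable_norm _ ?_
    have := hc ((r : ℝ) : ℂ) (by simpa using hr')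
    refine this.congr fun n => ?_
    rw [FormalMultilinearSeries.ofScalars_norm]
    simp
  r_pos := by norm_num
  hasSum := by
    intro y hy
    have hy' : ‖y‖ < 1 := by
      have h1 : Metric.eball (0 : ℂ) 1 = Metric.ball 0 1 := by
        rw [← Metric.eball_ofReal]; simp
      rw [h1] at hy
      simpa using hy
    have := (hc y hy').of_norm.hasSum
    simpa [FormalMultilinearSeries.ofScalars_apply_eq, zero_add, mul_comm] using this

lemma gq_fps_exists (f : ℂ → ℂ) (hf : DifferentiableOn ℂ f (Metric.ball 0 1)) :
    ∃ c : ℕ → ℂ, ∀ q : ℂ, ‖q‖ < 1 → Summable (fun n => ‖c n * q ^ n‖) ∧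
      HasSum (fun n => c n * q ^ n) (f q) := by
  have key : ∀ r : NNReal, 0 < r → r < 1 → HasFPowerSeriesOnBall f (cauchyPowerSeries f 0 r) 0 r :=
    fun r h0 h1 => (hf.mono (Metric.closedBall_subset_ball (by exact_mod_cast h1))).hasFPowerSeriesOnBall h0
  have hh : (0 : NNReal) < 1 / 2 ∧ (1 / 2 : NNReal) < 1 :=
    ⟨by norm_num, by rw [← NNReal.coe_lt_coe]; norm_num⟩
  set p := cauchyPowerSeries f 0 (1 / 2 : NNReal) with hp
  refine ⟨p.coeff, fun q hq => ?_⟩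
  obtain ⟨r, hr1, hr2⟩ : ∃ r : NNReal, ‖q‖ < r ∧ (r : ℝ) < 1 := by
    obtain ⟨r, h1, h2⟩ := exists_between hq
    exact ⟨⟨r, (norm_nonneg q).trans h1.le⟩, h1, h2⟩
  have hr0 : 0 < r := by exact_mod_cast (norm_nonneg q).trans_lt hr1
  have h := key r hr0 (by exact_mod_cast hr2)
  have heq : cauchyPowerSeries f 0 r = p :=
    h.hasFPowerSeriesAt.eq_formalMultilinearSeries (key _ hh.1 hh.2).hasFPowerSeriesAt
  rw [heq] at h
  have hq' : q ∈ Metric.eball (0 : ℂ) r := by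
    simpa [Metric.eball, edist_zero_right, ← NNReal.coe_lt_coe] using hr1
  have e : ∀ n, (p n fun _ => q) = p.coeff n * q ^ n := fun n => by
    rw [FormalMultilinearSeries.apply_eq_prod_smul_coeff]; simp [mul_comm]
  constructor
  · have := p.summable_norm_apply (x := q) (Metric.eball_subset_eball h.r_le hq')
    simpa only [e] using this
  · have := h.hasSum hq'
    simpa only [e, zero_add] using this

lemma gq_coeff (p ν : ℕ → ℤ)
    (hp : ∀ q : ℂ, ‖q‖ < 1 → Summable fun n => ‖(p n : ℂ) * q ^ n‖)
    (hν : ∀ q : ℂ, ‖q‖ < 1 → Summable fun n => ‖(ν n : ℂ) * q ^ n‖)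
    (hp0 : p 0 = 1) (hP : ∀ q : ℂ, ‖q‖ < 1 → ∑' n, (p n : ℂ) * q ^ n ≠ 0) :
    ∃ a : ℕ → ℤ, (∀ l, (∀ j ≤ l, ν j = 0) → a l = 0) ∧
      ∀ q : ℂ, ‖q‖ < 1 → Summable (fun n => ‖(a n : ℂ) * q ^ n‖) ∧
        (∑' n, (a n : ℂ) * q ^ n) * (∑' n, (p n : ℂ) * q ^ n) = ∑' n, (ν n : ℂ) * q ^ n := by
  have Fp := gq_fps (fun n => (p n : ℂ)) hp
  have Fν := gq_fps (fun n => (ν n : ℂ)) hν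
  have hb : Metric.eball (0 : ℂ) 1 = Metric.ball 0 1 := by
    rw [← Metric.eball_ofReal]; simp
  have dp := Fp.differentiableOn
  have dν := Fν.differentiableOn
  rw [hb] at dp dν
  obtain ⟨c, hc⟩ := gq_fps_exists _ (dν.div dp fun q hq => hP q (by simpa using hq))
  -- formal identity
  have hconv : ∀ n, ∑ kl ∈ Finset.HasAntidiagonal.antidiagonal n, c kl.1 * (p kl.2 : ℂ) = ν n := by
    have hsum : ∀ q : ℂ, ‖q‖ < 1 → ∀ n, ∑ kl ∈ Finset.HasAntidiagonal.antidiagonal n,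
        (c kl.1 * q ^ kl.1) * ((p kl.2 : ℂ) * q ^ kl.2)
        = (∑ kl ∈ Finset.HasAntidiagonal.antidiagonal n, c kl.1 * (p kl.2 : ℂ)) * q ^ n := fun q hq n => by
      rw [Finset.sum_mul]
      refine Finset.sum_congr rfl fun kl hkl => ?_
      rw [← Finset.HasAntidiagonal.mem_antidiagonal.mp hkl, pow_add]; ring
    have F1 := gq_fps (fun n => ∑ kl ∈ Finset.HasAntidiagonal.antidiagonal n, c kl.1 * (p kl.2 : ℂ)) fun q hq => by
      have := summable_norm_sum_mul_antidiagonal_of_summable_norm (hc q hq).1 (hp q hq)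
      simpa only [hsum q hq] using this
    have F2 : HasFPowerSeriesOnBall (fun q => ∑' n, (ν n : ℂ) * q ^ n) _ 0 1 := F1.congr (by
      intro q hq
      rw [hb] at hq
      have hq' : ‖q‖ < 1 := by simpa using hq
      have h1 := tsum_mul_tsum_eq_tsum_sum_antidiagonal_of_summable_norm (hc q hq').1 (hp q hq')
      simp only [hsum q hq'] at h1
      simp only
      rw [← h1, (hc q hq').2.tsum_eq]
      exact div_mul_cancel₀ _ (hP q hq'))
    have h3 := F2.hasFPowerSeriesAt.eq_formalMultilinearSeries Fν.hasFPowerSeriesAt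
    intro n
    have := congrArg (fun s => FormalMultilinearSeries.coeff s n) h3
    simpa [FormalMultilinearSeries.coeff_ofScalars] using this
  set pp : PowerSeries ℤ := PowerSeries.mk p with hpp
  set vv : PowerSeries ℤ := PowerSeries.mk ν with hvv
  have hu : pp * PowerSeries.invOfUnit pp 1 = 1 :=
    PowerSeries.mul_invOfUnit _ _ (by simp [hpp, hp0])
  set aa : PowerSeries ℤ := vv * PowerSeries.invOfUnit pp 1 with haa
  have hcc : PowerSeries.mk c = PowerSeries.map (Int.castRingHom ℂ) aa := by
    have h1 : PowerSeries.mk c * PowerSeries.map (Int.castRingHom ℂ) pp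
        = PowerSeries.map (Int.castRingHom ℂ) vv := by
      ext n
      rw [PowerSeries.coeff_mul]
      simpa [hpp, hvv] using hconv n
    rw [haa, map_mul, ← h1, mul_assoc, ← map_mul, hu]; simp
  have hca : ∀ n, c n = ((PowerSeries.coeff n aa : ℤ) : ℂ) := fun n => by
    have := congrArg (PowerSeries.coeff n) hcc
    simpa using this
  refine ⟨fun n => PowerSeries.coeff n aa, ?_, ?_⟩
  · intro l hl
    simp only [haa, PowerSeries.coeff_mul]
    refine Finset.sum_eq_zero fun kl hkl => ?_
    have := Finset.HasAntidiagonal.mem_antidiagonal.mp hkl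
    simp [hvv, hl kl.1 (by omega)]
  · intro q hq
    simp only [← hca]
    refine ⟨(hc q hq).1, ?_⟩
    rw [(hc q hq).2.tsum_eq]
    exact div_mul_cancel₀ _ (hP q hq)

end pser
section main

lemma gq_tri_inj : Function.Injective (fun n : ℕ => n * (n + 1) / 2) := by
  refine (strictMono_nat_of_lt_succ fun n => ?_).injective
  have : (n + 1) * (n + 1 + 1) = n * (n + 1) + (n + 1) * 2 := by ring
  simp only [this, Nat.add_mul_div_right _ _ (by norm_num : 0 < 2)]
  omega

lemma gq_extend (w : ℕ → ℤ) (A B : ℝ) (hw : ∀ n, ‖(w n : ℂ)‖ ≤ A * n + B) (q : ℂ) (hq : ‖q‖ < 1) :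
    Summable (fun n => ‖((Function.extend (fun n : ℕ => n * (n + 1) / 2) w 0 n : ℤ) : ℂ) * q ^ n‖) ∧
    ∑' n, ((Function.extend (fun n : ℕ => n * (n + 1) / 2) w 0 n : ℤ) : ℂ) * q ^ n
      = ∑' n : ℕ, (w n : ℂ) * q ^ (n * (n + 1) / 2) := by
  have h0 : ∀ n ∉ Set.range (fun n : ℕ => n * (n + 1) / 2),
      ((Function.extend (fun n : ℕ => n * (n + 1) / 2) w 0 n : ℤ) : ℂ) * q ^ n = 0 := fun n hn => by
    rw [Function.extend_apply' _ _ _ (by simpa using hn)]; simp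
  have h1 : ∀ n : ℕ, Function.extend (fun n : ℕ => n * (n + 1) / 2) w 0 (n * (n + 1) / 2) = w n :=
    fun n => gq_tri_inj.extend_apply w 0 n
  constructor
  · rw [← gq_tri_inj.summable_iff (fun n hn => by rw [h0 n hn, norm_zero])]
    refine (gq_summable hq (fun n => (w n : ℂ)) A B hw).congr fun n => ?_
    simp only [Function.comp, h1]
  · rw [← gq_tri_inj.tsum_eq (Function.support_subset_iff'.mpr h0)]
    simp only [h1]

lemma gq_e_norm (τ : ℂ) : ‖e τ‖ = Real.exp (-2 * Real.pi * τ.im) := by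
  rw [e, Complex.norm_exp]
  congr 1
  simp

lemma gq_e_add (a b : ℂ) : e (a + b) = e a * e b := by
  rw [e, e, e, ← Complex.exp_add]; ring_nf

lemma gq_e_ne (a : ℂ) : e a ≠ 0 := Complex.exp_ne_zero _

lemma gq_e_zpow (τ : ℂ) (z : ℤ) : (e τ) ^ z = e (z * τ) := by
  rw [e, e, ← Complex.exp_int_mul]; ring_nf

lemma gq_e_half : e (1 / 2) = -1 := by
  rw [e, ← Complex.exp_pi_mul_I]; ring_nf

lemma gq_e_quarter : e (1 / 4) = I := by
  rw [e, show 2 * (Real.pi : ℂ) * I * (1 / 4) = (Real.pi : ℂ) / 2 * I by ring]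
  exact Complex.exp_pi_div_two_mul_I

lemma gq_term (τ : ℂ) (m : ℤ) :
    e (((m : ℂ) + 1 / 2) ^ 2 / 2 * τ + ((m : ℂ) + 1 / 2) / 2) = I * e (τ / 8) * gqt (e τ) m := by
  obtain ⟨z, hz⟩ : (2 : ℤ) ∣ m * (m + 1) := (Int.even_mul_succ_self m).two_dvd
  have hz' : (m : ℂ) * (m + 1) = 2 * z := by exact_mod_cast hz
  rw [gqt, hz, Int.mul_ediv_cancel_left _ (by norm_num), gq_e_zpow, ← gq_e_half, gq_e_zpow,
    ← gq_e_quarter, ← gq_e_add, ← gq_e_add, ← gq_e_add]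
  congr 1
  linear_combination (τ / 2) * hz'

lemma gq_eta3 (τ : ℂ) (hτ : ‖e τ‖ < 1) :
    eta3 τ = e (τ / 8) * ∑' n : ℕ, ((-1) ^ n * (2 * n + 1) : ℂ) * (e τ) ^ (n * (n + 1) / 2) := by
  rw [← (gq_t_hasSum hτ).2, eta3]
  simp_rw [gq_term]
  rw [← tsum_mul_left, ← tsum_mul_left]
  congr 1; ext m
  linear_combination (-(((m : ℂ) + 1 / 2) * (e (τ / 8) * gqt (e τ) m))) * I_mul_I

lemma gq_num (τ : ℂ) (x : ℝ) :
    (∑' m : ℤ, if |x| < (m : ℝ) + 1 / 2 then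
      (((m : ℝ) + 1 / 2 - |x| : ℝ) : ℂ) * e (((m : ℂ) + 1 / 2) ^ 2 / 2 * τ + ((m : ℂ) + 1 / 2) / 2)
    else 0) = I * e (τ / 8) * ∑' n : ℕ, (if |x| < (n : ℝ) + 1 / 2 then
      (-1) ^ n * (((n : ℝ) + 1 / 2 - |x| : ℝ) : ℂ) else 0) * (e τ) ^ (n * (n + 1) / 2) := by
  rw [← (Nat.cast_injective (R := ℤ)).tsum_eq, ← tsum_mul_left]
  · congr 1; ext n
    rw [gq_term, gqt_nat]
    push_cast
    split_ifs <;> ring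
  · refine Function.support_subset_iff'.mpr fun m hm => ?_
    rw [if_neg]
    intro h
    apply hm
    have h1 : (0 : ℝ) < m + 1 / 2 := (abs_nonneg x).trans_lt h
    have h2 : (-1 : ℝ) < m := by linarith
    have h3 : -1 < m := by exact_mod_cast h2
    exact ⟨m.toNat, by simp; omega⟩

lemma gq_main (b : ℕ) (hb : 0 < b) (hbe : Even b) (x : ℝ) (hx : ∃ k : ℤ, x = (k : ℝ) / b) :
    ∃ a : ℕ → ℤ,
      (∀ l : ℕ, (l : ℝ) < x ^ 2 / 2 + |x| / b + 1 / (2 * b ^ 2) - 1 / 8 → a l = 0) ∧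
      (∀ q : ℂ, ‖q‖ < 1 → Summable fun n => ‖(a n : ℂ) * q ^ n‖) ∧
      ∀ τ : ℂ, 0 < τ.im → (b : ℂ) * gplus τ x
        = e (-(x : ℂ) ^ 2 * τ / 2) * ∑' n, (a n : ℂ) * (e τ) ^ n := by
  obtain ⟨k, hk⟩ := hx
  obtain ⟨h, hh⟩ := hbe
  have hbR : (0 : ℝ) < b := by exact_mod_cast hb
  have hhR : (b : ℝ) = h + h := by exact_mod_cast hh
  have hkx : |x| * b = |(k : ℝ)| := by
    rw [hk, abs_div, abs_of_pos hbR]; field_simp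
  have hsg : Real.sign x = (Int.sign k : ℝ) := by
    rcases lt_trichotomy k 0 with h1 | h1 | h1
    · have : (k : ℝ) < 0 := by exact_mod_cast h1
      rw [Real.sign_of_neg (hk ▸ div_neg_of_neg_of_pos this hbR), Int.sign_eq_neg_one_of_neg h1]
      simp
    · subst h1; simp [hk]
    · have : (0 : ℝ) < k := by exact_mod_cast h1
      rw [Real.sign_of_pos (hk ▸ div_pos this hbR), Int.sign_eq_one_of_pos h1]
      simp
  set w : ℕ → ℤ := fun n => if |x| < (n : ℝ) + 1 / 2 then
    k.sign * ((-1) ^ n * (b * n + h - |k|)) else 0 with hw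
  set u : ℕ → ℤ := fun n => (-1) ^ n * (2 * n + 1) with hu
  have hwc : ∀ n, (w n : ℂ) = b * (Real.sign x : ℂ) * (if |x| < (n : ℝ) + 1 / 2 then
      (-1) ^ n * (((n : ℝ) + 1 / 2 - |x| : ℝ) : ℂ) else 0) := fun n => by
    rw [hsg]
    simp only [hw]
    split_ifs with h1
    · have h2 : (b : ℝ) * ((n : ℝ) + 1 / 2 - |x|) = b * n + h - |(k : ℝ)| := by
        rw [← hkx]; linear_combination (1 / 2) * hhR
      have h3 : (b : ℂ) * (((n : ℝ) + 1 / 2 - |x| : ℝ) : ℂ)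
          = b * n + h - ((|(k : ℝ)| : ℝ) : ℂ) := by exact_mod_cast congrArg ((↑) : ℝ → ℂ) h2
      have h4 : ((|k| : ℤ) : ℂ) = ((|(k : ℝ)| : ℝ) : ℂ) := by
        rw [← Int.cast_abs, Complex.ofReal_intCast]
      rw [Int.cast_mul, Int.cast_mul, Int.cast_sub, h4]
      push_cast at h3 ⊢
      linear_combination -(k.sign * (-1) ^ n : ℂ) * h3
    · simp
  have bw : ∀ n, ‖(w n : ℂ)‖ ≤ b * n + b := fun n => by
    rw [hwc]
    have hs : ‖((Real.sign x : ℝ) : ℂ)‖ ≤ 1 := by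
      rw [Complex.norm_real]
      rcases Real.sign_apply_eq x with h | h | h <;> simp [h]
    have hi : ‖(if |x| < (n : ℝ) + 1 / 2 then
      (-1) ^ n * (((n : ℝ) + 1 / 2 - |x| : ℝ) : ℂ) else 0)‖ ≤ n + 1 := by
      split_ifs with h1
      · rw [norm_mul, Complex.norm_real, Real.norm_of_nonneg (by linarith)]
        simp only [norm_pow, norm_neg, norm_one, one_pow, one_mul]
        linarith [abs_nonneg x]
      · rw [norm_zero]; positivity
    rw [norm_mul, norm_mul, Complex.norm_natCast]
    calc (b : ℝ) * ‖((Real.sign x : ℝ) : ℂ)‖ * _ ≤ b * 1 * (n + 1) := by gcongr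
      _ = _ := by ring
  have bu : ∀ n, ‖(u n : ℂ)‖ ≤ 2 * n + 1 := fun n => by
    have : (u n : ℂ) = (-1) ^ n * ((2 * n + 1 : ℕ) : ℂ) := by simp [hu]
    rw [this, norm_mul, Complex.norm_natCast]
    simp
  have huc : ∀ n, (u n : ℂ) = (-1) ^ n * (2 * n + 1) := fun n => by simp [hu]
  have Eu := gq_extend u 2 1 bu
  have Ew := gq_extend w b b bw
  obtain ⟨a, ha1, ha2⟩ := gq_coeff (Function.extend (fun n : ℕ => n * (n + 1) / 2) u 0)
    (Function.extend (fun n : ℕ => n * (n + 1) / 2) w 0)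
    (fun q hq => (Eu q hq).1) (fun q hq => (Ew q hq).1)
    (by have := gq_tri_inj.extend_apply u 0 0
        simpa [hu] using this)
    (fun q hq => by
      rw [(Eu q hq).2]
      simp only [huc]
      exact gq_jacobi_ne hq)
  refine ⟨a, ?_, fun q hq => (ha2 q hq).1, ?_⟩
  · intro l hl
    apply ha1
    intro j hj
    by_cases hr : ∃ n : ℕ, n * (n + 1) / 2 = j
    swap
    · rw [Function.extend_apply' _ _ _ hr]; rfl
    obtain ⟨n, rfl⟩ := hr
    rw [show Function.extend (fun n : ℕ => n * (n + 1) / 2) w 0 (n * (n + 1) / 2) = w n from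
      gq_tri_inj.extend_apply w 0 n]
    simp only [hw]
    rw [if_neg]
    intro hlt
    have i1 : |(k : ℝ)| < b * n + h := by
      rw [← hkx]; nlinarith
    have i2 : |k| < b * n + h := by exact_mod_cast i1
    have i3 : |k| + 1 ≤ b * n + h := i2
    have i4 : |(k : ℝ)| + 1 ≤ b * n + h := by exact_mod_cast i3
    have i5 : |x| + 1 / b ≤ n + 1 / 2 := by
      rw [← mul_le_mul_iff_left₀ hbR, add_mul, hkx]
      field_simp
      linarith
    have i6 : (|x| + 1 / b) ^ 2 ≤ ((n : ℝ) + 1 / 2) ^ 2 :=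
      pow_le_pow_left₀ (by positivity) i5 2
    have i7 : ((n * (n + 1) / 2 : ℕ) : ℝ) = n * (n + 1) / 2 := by
      rw [Nat.cast_div (Nat.even_mul_succ_self n).two_dvd (by norm_num)]
      push_cast; ring
    have i8 : ((n * (n + 1) / 2 : ℕ) : ℝ) ≤ l := by exact_mod_cast hj
    have i9 : (|x| + 1 / b) ^ 2 / 2 = x ^ 2 / 2 + |x| / b + 1 / (2 * b ^ 2) := by
      rw [← sq_abs x]; field_simp; ring
    nlinarith
  · intro τ hτ
    have hq : ‖e τ‖ < 1 := by
      rw [gq_e_norm, Real.exp_lt_one_iff]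
      nlinarith [Real.pi_pos, mul_pos Real.pi_pos hτ]
    have h1 := (ha2 (e τ) hq).2
    rw [(Eu _ hq).2, (Ew _ hq).2] at h1
    simp only [huc, hwc] at h1
    have hne := gq_jacobi_ne hq
    rw [gplus, gq_eta3 τ hq, gq_num]
    simp only [mul_assoc] at h1
    rw [tsum_mul_left, tsum_mul_left] at h1
    simp only [mul_assoc] at hne ⊢
    generalize (∑' n : ℕ, (if |x| < (n : ℝ) + 1 / 2 then
      (-1) ^ n * (((n : ℝ) + 1 / 2 - |x| : ℝ) : ℂ) else 0) * (e τ) ^ (n * (n + 1) / 2)) = Z1 at *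
    have he := gq_e_ne (τ / 8)
    have hI := I_ne_zero
    rw [eq_div_of_mul_eq hne h1]
    field_simp

end main

/-- `g⁺_τ(x)` for `x ∈ (1/b)ℤ`: holomorphy, integral Fourier coefficients with
bounded denominator, and decay as `v → ∞`. -/
theorem gplus_rational_q_expansion (b : ℕ) (hb : 0 < b) (hbe : Even b) (x : ℝ)
    (hx : ∃ k : ℤ, x = (k : ℝ) / b) :
    (∀ τ : ℂ, 0 < τ.im → DifferentiableAt ℂ (fun σ => gplus σ x) τ) ∧
    (∃ a : ℤ → ℤ,
      (∀ n : ℤ, (n : ℝ) / (8 * b^2) < |x| / b + 1 / (2 * b^2) - 1/8 → a n = 0) ∧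
      (∀ τ : ℂ, 0 < τ.im →
        (b : ℂ) * e ((x : ℂ)^2 * τ / 2) * gplus τ x =
          ∑' n : ℤ, (a n : ℂ) * e ((n : ℂ) * τ / (8 * (b : ℂ)^2)))) ∧
    (∃ C v₀ : ℝ, ∀ τ : ℂ, v₀ ≤ τ.im →
      ‖gplus τ x‖ ≤ C * Real.exp (-2 * Real.pi * τ.im * (|x| / b + 1 / (2 * b^2) - 1/8))) := by
  have hbR : (0 : ℝ) < b := by exact_mod_cast hb
  have hbC : (b : ℂ) ≠ 0 := by exact_mod_cast hb.ne'
  obtain ⟨a, ha1, ha2, ha3⟩ := gq_main b hb hbe x hx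
  have hlt : ∀ τ : ℂ, 0 < τ.im → ‖e τ‖ < 1 := fun τ hτ => by
    rw [gq_e_norm, Real.exp_lt_one_iff]
    nlinarith [Real.pi_pos, mul_pos Real.pi_pos hτ]
  have hg : ∀ τ : ℂ, 0 < τ.im → gplus τ x
      = (b : ℂ)⁻¹ * (e (-(x : ℂ) ^ 2 * τ / 2) * ∑' n, (a n : ℂ) * (e τ) ^ n) := fun τ hτ => by
    rw [← ha3 τ hτ]; field_simp
  refine ⟨?_, ?_, ?_⟩
  · intro τ hτ
    have hev : (fun σ => gplus σ x) =ᶠ[nhds τ] fun τ =>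
        (b : ℂ)⁻¹ * (e (-(x : ℂ) ^ 2 * τ / 2) * ∑' n, (a n : ℂ) * (e τ) ^ n) := by
      filter_upwards [(isOpen_lt continuous_const Complex.continuous_im).mem_nhds hτ] with σ hσ
      exact hg σ hσ
    rw [hev.differentiableAt_iff]
    have F := (gq_fps (fun n => (a n : ℂ)) ha2).differentiableOn
    have hb : Metric.eball (0 : ℂ) 1 = Metric.ball 0 1 := by
      rw [← Metric.eball_ofReal]; simp
    rw [hb] at F
    have F1 : DifferentiableAt ℂ (fun q : ℂ => ∑' n, (a n : ℂ) * q ^ n) (e τ) :=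
      (F (e τ) (by simpa using hlt τ hτ)).differentiableAt
        (Metric.isOpen_ball.mem_nhds (by simpa using hlt τ hτ))
    have F2 : Differentiable ℂ e := by unfold e; fun_prop
    have F3 : DifferentiableAt ℂ (fun τ => ∑' n, (a n : ℂ) * (e τ) ^ n) τ :=
      DifferentiableAt.comp τ F1 (F2 τ)
    have F4 : DifferentiableAt ℂ (fun τ => e (-(x : ℂ) ^ 2 * τ / 2)) τ :=
      DifferentiableAt.comp (g := e) τ (F2 _) (by fun_prop)
    exact (F4.mul F3).const_mul _
  · set M : ℤ := 8 * (b : ℤ) ^ 2 with hM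
    have hM0 : 0 < M := by positivity
    have hinj : Function.Injective (fun l : ℕ => M * (l : ℤ)) := fun l l' h => by
      have := mul_left_cancel₀ hM0.ne' h
      exact_mod_cast this
    refine ⟨Function.extend (fun l : ℕ => M * (l : ℤ)) a 0, ?_, ?_⟩
    · intro n hn
      by_cases hr : ∃ l : ℕ, M * (l : ℤ) = n
      · obtain ⟨l, rfl⟩ := hr
        rw [show Function.extend (fun l : ℕ => M * (l : ℤ)) a 0 (M * (l : ℤ)) = a l from
          hinj.extend_apply a 0 l]
        apply ha1
        have h1 : ((M * (l : ℤ) : ℤ) : ℝ) / (8 * b ^ 2) = l := by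
          rw [hM]; push_cast; field_simp
        rw [h1] at hn
        nlinarith [sq_nonneg x]
      · rw [Function.extend_apply' _ _ _ hr]; rfl
    · intro τ hτ
      rw [← hinj.tsum_eq]
      · have h1 : (b : ℂ) * e ((x : ℂ) ^ 2 * τ / 2) * gplus τ x
            = e ((x : ℂ) ^ 2 * τ / 2) * ((b : ℂ) * gplus τ x) := by ring
        rw [h1, ha3 τ hτ, ← mul_assoc, ← gq_e_add]
        have h2 : (x : ℂ) ^ 2 * τ / 2 + -(x : ℂ) ^ 2 * τ / 2 = 0 := by ring
        have h3 : e 0 = 1 := by simp [e]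
        rw [h2, h3, one_mul]
        congr 1; ext l
        rw [hinj.extend_apply a 0 l, ← zpow_natCast, gq_e_zpow]
        congr 2
        rw [hM]; push_cast; field_simp
      · refine Function.support_subset_iff'.mpr fun n hn => ?_
        rw [Function.extend_apply' _ _ _ (by simpa using hn)]; simp
  · set L : ℝ := x ^ 2 / 2 + |x| / b + 1 / (2 * b ^ 2) - 1 / 8 with hL
    have hsI := ha2 (e I) (hlt I (by simp))
    set K : ℝ := ∑' n, ‖(a n : ℂ) * (e I) ^ n‖ with hK
    refine ⟨(b : ℝ)⁻¹ * (Real.exp (2 * Real.pi * L) * K), 1, fun τ hτ => ?_⟩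
    have hτ0 : 0 < τ.im := by linarith
    have hs := ha2 (e τ) (hlt τ hτ0)
    have hterm : ∀ n, ‖(a n : ℂ) * (e τ) ^ n‖
        ≤ Real.exp (-2 * Real.pi * (τ.im - 1) * L) * ‖(a n : ℂ) * (e I) ^ n‖ := fun n => by
      by_cases hn : (n : ℝ) < L
      · rw [ha1 n hn]; simp
      · rw [not_lt] at hn
        rw [norm_mul, norm_mul, norm_pow, norm_pow, gq_e_norm, gq_e_norm, ← Real.exp_nat_mul,
          ← Real.exp_nat_mul,
          mul_left_comm (Real.exp _), ← Real.exp_add]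
        refine mul_le_mul_of_nonneg_left (Real.exp_le_exp.mpr ?_) (norm_nonneg _)
        simp only [Complex.I_im]
        nlinarith [mul_nonneg (mul_nonneg Real.pi_pos.le (sub_nonneg.mpr hτ)) (sub_nonneg.mpr hn)]
    have hsum : ‖∑' n, (a n : ℂ) * (e τ) ^ n‖ ≤ Real.exp (-2 * Real.pi * (τ.im - 1) * L) * K := by
      refine (norm_tsum_le_tsum_norm hs).trans ?_
      rw [hK, ← tsum_mul_left]
      exact hs.tsum_le_tsum hterm (hsI.mul_left _)
    have hex : ‖e (-(x : ℂ) ^ 2 * τ / 2)‖ = Real.exp (Real.pi * x ^ 2 * τ.im) := by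
      have : -(x : ℂ) ^ 2 * τ / 2 = ((-x ^ 2 / 2 : ℝ) : ℂ) * τ := by push_cast; ring
      rw [gq_e_norm, this, Complex.im_ofReal_mul]
      congr 1; ring
    rw [hg τ hτ0, norm_mul, norm_mul, hex, norm_inv, Complex.norm_natCast]
    have hK0 : Real.exp (Real.pi * x ^ 2 * τ.im) * (Real.exp (-2 * Real.pi * (τ.im - 1) * L) * K)
        = Real.exp (2 * Real.pi * L) * K *
          Real.exp (-2 * Real.pi * τ.im * (|x| / b + 1 / (2 * b ^ 2) - 1 / 8)) := by
      rw [← mul_assoc, ← Real.exp_add, mul_right_comm (Real.exp (2 * Real.pi * L)),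
        ← Real.exp_add]
      congr 2
      rw [hL]; ring
    rw [mul_assoc (b : ℝ)⁻¹, ← hK0]
    gcongr
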